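/- arXiv:1010.1922 — 2 statements merged into one kernel-verified Lean document; each statement's English description precedes it below -/
import Mathlib

section
/- For any finite abstract simplicial complex K on {1,…,m} and any natural number s ≥ 1, the s-th derivative of the f-polynomial satisfies (d/dt)^s f_K(t) = s! · Σ_{σ ∈ K, |σ| = s} f_{link_K σ}(t). -/
/-!
Differentiating `t^|ρ|` exactly `s` times gives `|ρ| (|ρ| - 1) ⋯ (|ρ| - s + 1) t^(|ρ| - s)`, that is,
`s!` times the sum of `t^(|ρ| - s)` over the `s`-element subsets `σ` of `ρ`. Summing over `ρ ∈ K` and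
exchanging the two sums, each `σ` lies in `K` because `K` is closed under subsets, and the simplices
`ρ ∈ K` containing `σ` correspond to the simplices `ρ \ σ` of the link of `σ`
(`fPoly_linkK_eq_sum`).
-/

noncomputable section
open scoped Classical
open Polynomial

/-- `K` is a (finite abstract) simplicial complex on the vertex set `Fin m`:
it contains the empty set and is closed under taking subsets. -/
def IsSimplicialComplex {m : ℕ} (K : Finset (Finset (Fin m))) : Prop :=
  ∅ ∈ K ∧ ∀ σ ∈ K, ∀ τ ⊆ σ, τ ∈ K

/-- The f-polynomial `f_K(t) = Σ_{σ ∈ K} t^|σ|`. -/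
def fPoly {m : ℕ} (K : Finset (Finset (Fin m))) : Polynomial ℤ :=
  ∑ σ ∈ K, Polynomial.X ^ σ.card

/-- The link of `σ` in `K`: all `τ` disjoint from `σ` with `τ ∪ σ ∈ K`. -/
def linkK {m : ℕ} (K : Finset (Finset (Fin m))) (σ : Finset (Fin m)) :
    Finset (Finset (Fin m)) :=
  Finset.univ.filter fun τ => τ ∩ σ = ∅ ∧ τ ∪ σ ∈ K

/-- `σ` is a maximal (under inclusion) simplex of `K`. -/
def IsMaxSimplex {m : ℕ} (K : Finset (Finset (Fin m))) (σ : Finset (Fin m)) : Prop :=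
  σ ∈ K ∧ ∀ τ ∈ K, σ ⊆ τ → σ = τ

/-- `σ` is a face simplex of `K`: an intersection of a nonempty collection of
maximal simplices of `K`. -/
def IsFaceSimplex {m : ℕ} (K : Finset (Finset (Fin m))) (σ : Finset (Fin m)) : Prop :=
  ∃ S : Finset (Finset (Fin m)), S.Nonempty ∧ (∀ τ ∈ S, IsMaxSimplex K τ) ∧ σ = S.inf id

/-- The set `F(K)` of face simplices of `K`, as a finset. -/
def faceSimplices {m : ℕ} (K : Finset (Finset (Fin m))) : Finset (Finset (Fin m)) :=
  Finset.univ.filter fun σ => IsFaceSimplex K σ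

/-- The f-polynomial of the link of `σ` as a sum over the simplices of `K` containing `σ`, via the
bijection `τ ↦ τ ∪ σ` with inverse `ρ ↦ ρ \ σ`. -/
theorem fPoly_linkK_eq_sum {m : ℕ} (K : Finset (Finset (Fin m))) (σ : Finset (Fin m)) :
    fPoly (linkK K σ) =
      ∑ ρ ∈ K.filter (fun ρ => σ ⊆ ρ), (X : ℤ[X]) ^ (ρ.card - σ.card) := by
  unfold fPoly
  refine Finset.sum_bij' (fun τ _ => τ ∪ σ) (fun ρ _ => ρ \ σ) ?_ ?_ ?_ ?_ ?_
  · intro τ hτ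
    simp only [linkK, Finset.mem_filter, Finset.mem_univ, true_and] at hτ
    exact Finset.mem_filter.2 ⟨hτ.2, Finset.subset_union_right⟩
  · intro ρ hρ
    obtain ⟨hρK, hσρ⟩ := Finset.mem_filter.1 hρ
    simp only [linkK, Finset.mem_filter, Finset.mem_univ, true_and]
    exact ⟨Finset.sdiff_inter_self _ _, by rwa [Finset.sdiff_union_of_subset hσρ]⟩
  · intro τ hτ
    simp only [linkK, Finset.mem_filter, Finset.mem_univ, true_and] at hτ
    exact Finset.union_sdiff_cancel_right (Finset.disjoint_iff_inter_eq_empty.2 hτ.1)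
  · intro ρ hρ
    exact Finset.sdiff_union_of_subset (Finset.mem_filter.1 hρ).2
  · intro τ hτ
    simp only [linkK, Finset.mem_filter, Finset.mem_univ, true_and] at hτ
    rw [Finset.card_union_of_disjoint (Finset.disjoint_iff_inter_eq_empty.2 hτ.1),
      Nat.add_sub_cancel]

/-- The `s`-th derivative of the f-polynomial:
`(d/dt)^s f_K(t) = s! · Σ_{σ ∈ K, |σ| = s} f_{link_K σ}(t)`. -/
theorem derivative_pow_fPoly (m s : ℕ) (hs : 1 ≤ s) (K : Finset (Finset (Fin m)))
    (hK : IsSimplicialComplex K) :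
    (Polynomial.derivative)^[s] (fPoly K) =
      (s.factorial : ℤ) • ∑ σ ∈ K.filter (fun σ => σ.card = s), fPoly (linkK K σ) := by
  have hswap : ∑ σ ∈ K.filter (fun σ => σ.card = s), fPoly (linkK K σ) =
      ∑ ρ ∈ K, ∑ σ ∈ ρ.powersetCard s, (X : ℤ[X]) ^ (ρ.card - σ.card) := by
    simp_rw [fPoly_linkK_eq_sum]
    refine Finset.sum_comm' fun σ ρ => ?_
    simp only [Finset.mem_filter, Finset.mem_powersetCard]
    constructor
    · rintro ⟨⟨-, hcard⟩, hρ, hσρ⟩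
      exact ⟨⟨hσρ, hcard⟩, hρ⟩
    · rintro ⟨⟨hσρ, hcard⟩, hρ⟩
      exact ⟨⟨hK.2 ρ hρ σ hσρ, hcard⟩, hρ, hσρ⟩
  rw [hswap, Finset.smul_sum, fPoly, Polynomial.iterate_derivative_sum]
  refine Finset.sum_congr rfl fun ρ _ => ?_
  have hinner : ∑ σ ∈ ρ.powersetCard s, (X : ℤ[X]) ^ (ρ.card - σ.card) =
      (ρ.card.choose s) • (X : ℤ[X]) ^ (ρ.card - s) := by
    rw [← Finset.card_powersetCard, ← Finset.sum_const]
    refine Finset.sum_congr rfl fun σ hσ => ?_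
    rw [(Finset.mem_powersetCard.1 hσ).2]
  rw [hinner, Polynomial.iterate_derivative_X_pow_eq_smul,
    Nat.descFactorial_eq_factorial_mul_choose, Nat.cast_mul, mul_smul]
  simp only [Nat.cast_smul_eq_nsmul]
end
end

section
/- Every convex polytope can be triangulated using only its own vertices: if V ⊂ ℝ^n is a finite set and Q = convexHull ℝ V, then there exists a finite geometric simplicial complex 𝒮 in ℝ^n (a collection of affinely independent finite sets of points, closed under passing to nonempty subsets, such that the convex hulls of any two of its faces intersect in the convex hull of a common face) with all vertices of 𝒮 being extreme points of Q and with the union of the convex hulls of the faces of 𝒮 equal to Q. -/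
/-!
The triangulation is the one that a lexicographic rule selects. List the extreme points of `Q` as
`v : Fin m → ℝⁿ`. A point `x ∈ Q` is in general a convex combination of the `v i` in many ways; the
admissible weight vectors form a compact subset of the standard simplex, so one of them is
lexicographically largest. It is unique, because the lexicographic order is total. A set `σ` of
indices is called a cell when all weight vectors supported on `σ` are lexicographically largest for
the points they represent.

* Subsets of cells are cells, by definition.
* A point in the hulls of two cells `σ` and `τ` has only one lexicographically largest weight vector,
  which is therefore supported on `σ ∩ τ`. So cells meet in common faces
  (`IsCell.convexHull_inter_subset`).
* Cells are affinely independent: a Radon partition of a cell would give two disjoint cells with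
  intersecting hulls (`IsCell.affineIndependent`).
* The cells cover `Q`: the support of a lexicographically largest weight vector `w` is a cell, since
  an improvement of another vector with the same support, scaled down, would also improve `w`
  (`IsLexMax.isCell_support`).

That `Q` is the hull of its extreme points is the Krein–Milman theorem.
-/

noncomputable section
open scoped Classical

namespace LexTriangulation

/-- A vector is lexicographically positive if its first nonzero coordinate is positive. -/
def LexPos {m : ℕ} (μ : Fin m → ℝ) : Prop :=
  ∃ i, 0 < μ i ∧ ∀ j < i, μ j = 0

lemma LexPos.smul {m : ℕ} {μ : Fin m → ℝ} (h : LexPos μ) {c : ℝ} (hc : 0 < c) :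
    LexPos (c • μ) := by
  obtain ⟨i, hi, hj⟩ := h
  exact ⟨i, by simpa using mul_pos hc hi, fun j hji => by simp [hj j hji]⟩

lemma eq_of_not_lexPos {m : ℕ} {w w' : Fin m → ℝ} (h : ¬ LexPos (w' - w))
    (h' : ¬ LexPos (w - w')) : w = w' := by
  have key : ∀ i, w i = w' i := fun i => by
    induction i using WellFoundedLT.induction with
    | ind i ih =>
      by_contra hne
      rcases lt_or_gt_of_ne hne with hlt | hlt
      · exact h ⟨i, by simpa using hlt, fun j hj => by simp [ih j hj]⟩
      · exact h' ⟨i, by simpa using hlt, fun j hj => by simp [ih j hj]⟩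
  exact funext key

/-- A nonempty compact set of vectors has a lexicographically largest element. -/
lemma exists_lexMax {m : ℕ} {K : Set (Fin m → ℝ)} (hK : IsCompact K) (hne : K.Nonempty) :
    ∃ w ∈ K, ∀ w' ∈ K, ¬ LexPos (w' - w) := by
  -- `K'` is obtained by maximising the first `k` coordinates successively; the third condition
  -- says that it consists of whole fibres of the projection to these coordinates.
  have key : ∀ k ≤ m, ∃ K' ⊆ K, IsCompact K' ∧ K'.Nonempty ∧
      (∀ w ∈ K', ∀ w' ∈ K, (∀ j : Fin m, (j : ℕ) < k → w' j = w j) → w' ∈ K') ∧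
      ∀ w ∈ K', ∀ w' ∈ K, ∀ i : Fin m, (i : ℕ) < k → (∀ j < i, w' j = w j) → w' i ≤ w i := by
    intro k
    induction k with
    | zero => exact fun _ => ⟨K, subset_rfl, hK, hne, fun _ _ _ h _ => h, by simp⟩
    | succ k ih =>
      intro hk
      obtain ⟨K', hsub, hcomp, hne', hfib, hmax⟩ := ih (by omega)
      have hcont : Continuous fun w : Fin m → ℝ => w ⟨k, hk⟩ := continuous_apply _
      obtain ⟨a, ha, hamax⟩ := hcomp.exists_isMaxOn hne' hcont.continuousOn
      refine ⟨K' ∩ {w | w ⟨k, hk⟩ = a ⟨k, hk⟩}, Set.inter_subset_left.trans hsub,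
        hcomp.inter_right (isClosed_eq hcont continuous_const), ⟨a, ha, rfl⟩, ?_, ?_⟩
      · rintro w ⟨hw, hwa⟩ w' hw' hj
        exact ⟨hfib w hw w' hw' fun j hjk => hj j (by omega), (hj ⟨k, hk⟩ (by simp)).trans hwa⟩
      · rintro w ⟨hw, hwa⟩ w' hw' i hi hj
        rcases Nat.lt_succ_iff_lt_or_eq.1 hi with hi | hi
        · exact hmax w hw w' hw' i hi hj
        · obtain rfl : i = ⟨k, hk⟩ := Fin.ext hi
          exact (hamax (hfib w hw w' hw' fun j hjk => hj j hjk)).trans_eq hwa.symm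
  obtain ⟨K', hsub, -, ⟨w, hw⟩, -, hmax⟩ := key m le_rfl
  refine ⟨w, hsub hw, fun w' hw' ⟨i, hi, hj⟩ => ?_⟩
  have := hmax w hw w' hw' i i.2 fun j hji => sub_eq_zero.1 (hj j hji)
  simp only [Pi.sub_apply] at hi
  linarith

variable {m n : ℕ}

/-- The weight vector `w` is lexicographically largest among all weight vectors representing the
same convex combination of the points `v i`. -/
def IsLexMax (v : Fin m → Fin n → ℝ) (w : Fin m → ℝ) : Prop :=
  w ∈ stdSimplex ℝ (Fin m) ∧
    ∀ w' ∈ stdSimplex ℝ (Fin m), ∑ i, w' i • v i = ∑ i, w i • v i → ¬ LexPos (w' - w)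

/-- A set of indices is a cell if every weight vector supported on it is lexicographically
largest for the point it represents. -/
def IsCell (v : Fin m → Fin n → ℝ) (σ : Finset (Fin m)) : Prop :=
  ∀ w ∈ stdSimplex ℝ (Fin m), (∀ i ∉ σ, w i = 0) → IsLexMax v w

variable {v : Fin m → Fin n → ℝ} {σ τ : Finset (Fin m)}

lemma IsCell.mono (hσ : IsCell v σ) (h : τ ⊆ σ) : IsCell v τ :=
  fun w hw hwτ => hσ w hw fun i hi => hwτ i fun h' => hi (h h')

lemma IsLexMax.unique {w w' : Fin m → ℝ} (hw : IsLexMax v w) (hw' : IsLexMax v w')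
    (h : ∑ i, w i • v i = ∑ i, w' i • v i) : w = w' :=
  eq_of_not_lexPos (hw.2 w' hw'.1 h.symm) (hw'.2 w hw.1 h)

lemma IsLexMax.isCell_support {w : Fin m → ℝ} (hw : IsLexMax v w) :
    IsCell v (Finset.univ.filter fun i => w i ≠ 0) := by
  intro w₁ hw₁ hsupp
  refine ⟨hw₁, fun w₂ hw₂ heq hpos => ?_⟩
  have hne : (Finset.univ.filter fun i => w i ≠ 0).Nonempty := by
    by_contra hempty
    have h0 : ∀ i, w i = 0 := by simpa [Finset.filter_eq_empty_iff] using hempty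
    have := hw.1.2
    simp [h0] at this
  obtain ⟨i₀, hi₀, hmin⟩ := Finset.exists_min_image _ w hne
  have hε : 0 < w i₀ := lt_of_le_of_ne (hw.1.1 i₀) (Ne.symm (by simpa using hi₀))
  -- The smallest nonzero weight is a step length that keeps all weights nonnegative.
  have hdom : ∀ i, w i₀ * w₁ i ≤ w i := by
    intro i
    by_cases hi : w i = 0
    · simp [hi, hsupp i (by simpa using hi)]
    · have h1 : w₁ i ≤ 1 := hw₁.2 ▸ Finset.single_le_sum (fun j _ => hw₁.1 j) (Finset.mem_univ i)
      exact (mul_le_of_le_one_right hε.le h1).trans (hmin i (by simpa using hi))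
  refine hw.2 (w + w i₀ • (w₂ - w₁)) ⟨fun i => ?_, ?_⟩ ?_ ?_
  · have := mul_nonneg hε.le (hw₂.1 i)
    have := hdom i
    simp only [Pi.add_apply, Pi.smul_apply, Pi.sub_apply, smul_eq_mul, mul_sub]
    linarith
  · simp [Finset.sum_add_distrib, ← Finset.mul_sum, hw.1.2, hw₁.2, hw₂.2]
  · simp [add_smul, sub_smul, mul_smul, Finset.sum_add_distrib, ← Finset.smul_sum, heq]
  · simpa using hpos.smul hε

lemma mem_convexHull_image_iff (hv : Function.Injective v) {x : Fin n → ℝ} :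
    x ∈ convexHull ℝ (σ.image v : Set (Fin n → ℝ)) ↔
      ∃ w ∈ stdSimplex ℝ (Fin m), (∀ i ∉ σ, w i = 0) ∧ ∑ i, w i • v i = x := by
  rw [Finset.mem_convexHull']
  constructor
  · rintro ⟨w, h0, h1, hx⟩
    rw [Finset.sum_image hv.injOn] at h1 hx
    refine ⟨fun i => if i ∈ σ then w (v i) else 0, ⟨fun i => ?_, ?_⟩, ?_, ?_⟩
    · by_cases hi : i ∈ σ
      · simpa [hi] using h0 _ (Finset.mem_image_of_mem v hi)
      · simp [hi]
    · simpa using h1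
    · intro i hi
      simp [hi]
    · simpa [ite_smul] using hx
  · rintro ⟨w, hw, hsupp, hx⟩
    refine ⟨Function.extend v w 0, ?_, ?_, ?_⟩
    · intro y hy
      obtain ⟨i, -, rfl⟩ := Finset.mem_image.1 hy
      simpa [hv.extend_apply] using hw.1 i
    · rw [Finset.sum_image hv.injOn, ← hw.2]
      simp only [hv.extend_apply]
      exact Finset.sum_subset (Finset.subset_univ _) fun i _ hi => hsupp i hi
    · rw [Finset.sum_image hv.injOn, ← hx]
      simp only [hv.extend_apply]
      exact Finset.sum_subset (Finset.subset_univ _) fun i _ hi => by simp [hsupp i hi]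

lemma IsCell.convexHull_inter_subset (hv : Function.Injective v) (hσ : IsCell v σ)
    (hτ : IsCell v τ) :
    convexHull ℝ (σ.image v : Set (Fin n → ℝ)) ∩ convexHull ℝ (τ.image v : Set (Fin n → ℝ)) ⊆
      convexHull ℝ ((σ ∩ τ).image v : Set (Fin n → ℝ)) := by
  rintro x ⟨hxσ, hxτ⟩
  obtain ⟨w, hw, hwσ, hwx⟩ := (mem_convexHull_image_iff hv).1 hxσ
  obtain ⟨w', hw', hwτ, hwx'⟩ := (mem_convexHull_image_iff hv).1 hxτ
  obtain rfl := (hσ w hw hwσ).unique (hτ w' hw' hwτ) (hwx.trans hwx'.symm)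
  refine (mem_convexHull_image_iff hv).2 ⟨w, hw, fun i hi => ?_, hwx⟩
  by_cases h : i ∈ σ
  · exact hwτ i fun h' => hi (Finset.mem_inter.2 ⟨h, h'⟩)
  · exact hwσ i h

lemma IsCell.affineIndependent (hv : Function.Injective v) (hσ : IsCell v σ) :
    AffineIndependent ℝ (fun i : σ => v i) := by
  by_contra hdep
  obtain ⟨I, x, hx⟩ := Convex.radon_partition hdep
  obtain ⟨ρ, hρ⟩ : ∃ ρ : Set σ → Finset (Fin m), ∀ J, (ρ J : Set (Fin m)) = Subtype.val '' J :=
    ⟨fun J => (Subtype.val '' J).toFinset, fun J => Set.coe_toFinset _⟩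
  have himage : ∀ J : Set σ, (fun i : σ => v i) '' J = ((ρ J).image v : Finset (Fin n → ℝ)) := by
    intro J
    rw [Finset.coe_image, hρ, Set.image_image]
  have hsub : ∀ J : Set σ, ρ J ⊆ σ := by
    intro J i hi
    rw [← Finset.mem_coe, hρ] at hi
    obtain ⟨j, -, rfl⟩ := hi
    exact j.2
  have hempty : ρ I ∩ ρ Iᶜ = ∅ := by
    rw [← Finset.disjoint_iff_inter_eq_empty, ← Finset.disjoint_coe, hρ, hρ,
      Set.disjoint_image_iff Subtype.val_injective]
    exact disjoint_compl_right
  rw [himage, himage] at hx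
  have hmem := (hσ.mono (hsub I)).convexHull_inter_subset hv (hσ.mono (hsub Iᶜ)) hx
  rw [hempty] at hmem
  simp at hmem

lemma exists_isLexMax {x : Fin n → ℝ} (hv : Function.Injective v)
    (hx : x ∈ convexHull ℝ (Set.range v)) :
    ∃ w, IsLexMax v w ∧ ∑ i, w i • v i = x := by
  obtain ⟨w, hw, -, hwx⟩ := (mem_convexHull_image_iff (σ := Finset.univ) hv).1 (by simpa using hx)
  have hcomp : IsCompact (stdSimplex ℝ (Fin m) ∩ {w | ∑ i, w i • v i = x}) :=
    (isCompact_stdSimplex ℝ (Fin m)).inter_right (isClosed_eq (by fun_prop) continuous_const)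
  obtain ⟨u, ⟨hu, hux⟩, hmax⟩ := exists_lexMax hcomp ⟨w, hw, hwx⟩
  exact ⟨u, ⟨hu, fun w' hw' h => hmax w' ⟨hw', h.trans hux⟩⟩, hux⟩

/-- The simplicial complex formed by the cells of an injective family of points. -/
def cellComplex (v : Fin m → Fin n → ℝ) (hv : Function.Injective v) :
    Geometry.SimplicialComplex ℝ (Fin n → ℝ) :=
  .ofErase {s | ∃ σ, IsCell v σ ∧ σ.image v = s}
    (by
      rintro _ ⟨σ, hσ, rfl⟩
      have hrange : Set.range (fun i : σ => v i) = (σ.image v : Finset (Fin n → ℝ)) := by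
        ext
        simp
      have hind := (hσ.affineIndependent hv).range
      rw [hrange] at hind
      exact hind)
    (by
      rintro _ t hts ⟨σ, hσ, rfl⟩
      refine ⟨σ.filter fun i => v i ∈ t, hσ.mono (Finset.filter_subset _ _), ?_⟩
      ext y
      have := @hts y
      simp only [Finset.mem_image, Finset.mem_filter] at this ⊢
      grind)
    (by
      rintro _ ⟨σ, hσ, rfl⟩ _ ⟨τ, hτ, rfl⟩
      rw [← Finset.coe_inter, ← Finset.image_inter _ _ hv]
      exact hσ.convexHull_inter_subset hv hτ)

lemma cellComplex_faces_subset (hv : Function.Injective v) :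
    (cellComplex v hv).faces ⊆ Set.range fun σ : Finset (Fin m) => σ.image v := by
  rintro _ ⟨⟨σ, -, rfl⟩, -⟩
  exact ⟨σ, rfl⟩

lemma cellComplex_space (hv : Function.Injective v) :
    (cellComplex v hv).space = convexHull ℝ (Set.range v) := by
  ext x
  rw [Geometry.SimplicialComplex.mem_space_iff]
  constructor
  · rintro ⟨s, hs, hx⟩
    obtain ⟨σ, rfl⟩ := cellComplex_faces_subset hv hs
    exact convexHull_mono (by simp) hx
  · intro hx
    obtain ⟨w, hw, hwx⟩ := exists_isLexMax hv hx
    have hmem := (mem_convexHull_image_iff (σ := Finset.univ.filter fun i => w i ≠ 0) hv).2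
      ⟨w, hw.1, by simp, hwx⟩
    refine ⟨_, ⟨⟨_, hw.isCell_support, rfl⟩, fun h => ?_⟩, hmem⟩
    rw [Set.mem_singleton_iff.1 h] at hmem
    simp at hmem

end LexTriangulation

/-- Every convex polytope `Q = conv V ⊂ ℝⁿ` can be triangulated using only its own
vertices: there is a finite geometric simplicial complex all of whose vertices are
extreme points of `Q` and whose underlying space is `Q`. -/
theorem polytope_triangulation (n : ℕ) (V : Finset (Fin n → ℝ))
    (Q : Set (Fin n → ℝ)) (hQ : Q = convexHull ℝ (V : Set (Fin n → ℝ))) :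
    ∃ S : Geometry.SimplicialComplex ℝ (Fin n → ℝ),
      S.faces.Finite ∧ S.vertices ⊆ Q.extremePoints ℝ ∧ S.space = Q := by
  have hfin : (Q.extremePoints ℝ).Finite :=
    V.finite_toSet.subset (hQ ▸ extremePoints_convexHull_subset)
  have hcompact : IsCompact Q := hQ ▸ V.finite_toSet.isCompact_convexHull ℝ
  have hconvex : Convex ℝ Q := hQ ▸ convex_convexHull ℝ _
  have hull : convexHull ℝ (Q.extremePoints ℝ) = Q := by
    rw [← (hfin.isClosed_convexHull ℝ).closure_eq, closure_convexHull_extremePoints hcompact hconvex]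
  obtain ⟨m, v, hv, hrange⟩ : ∃ (m : ℕ) (v : Fin m → Fin n → ℝ), Function.Injective v ∧
      Set.range v = Q.extremePoints ℝ := by
    obtain ⟨m, v, h⟩ := hfin.fin_embedding
    exact ⟨m, v, v.injective, h⟩
  refine ⟨LexTriangulation.cellComplex v hv, ?_, ?_, ?_⟩
  · exact (Set.finite_range _).subset (LexTriangulation.cellComplex_faces_subset hv)
  · intro x hx
    obtain ⟨σ, hσ⟩ := LexTriangulation.cellComplex_faces_subset hv hx
    obtain ⟨i, -, rfl⟩ := Finset.mem_image.1 (hσ.ge (Finset.mem_singleton_self x))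
    exact hrange ▸ Set.mem_range_self i
  · rw [LexTriangulation.cellComplex_space, hrange, hull]
end
end
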